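/- (Theorem 3.) Let γ = (1/2) sup_{P_0 ∈ 𝒫_0^η, P_1 ∈ 𝒫_1^η} (1 − TV(P_0, P_1)) and γ_ε = (1/2) sup_{P_0 ∈ 𝒫^{η+ε}_{0,N}, P_1 ∈ 𝒫^{η+ε}_{1,N}} (1 − TV(P_0, P_1)), where S_N is an ε-net of X, each ψ_k is 1-Lipschitz, η ∈ [Δ, η_0] and η + ε ≤ η_0 < η_max. Then |γ_ε − γ| ≤ L_0 ε, where L_0 is the Lipschitz constant on [Δ, η_0] of the concave function g(θ) = sup_{P_0 ∈ 𝒫_0^θ, P_1 ∈ 𝒫_1^θ}(1 − TV(P_0, P_1)); in particular γ_ε → γ as ε → 0. -/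

import Mathlib

open MeasureTheory

/-- The total variation distance between two measures:
`TV(P, Q) = sup over measurable sets A of |P(A) − Q(A)|`. -/
noncomputable def tv {Ω : Type*} [MeasurableSpace Ω] (P Q : Measure Ω) : ℝ :=
  ⨆ A : {A : Set Ω // MeasurableSet A}, |(P A.1).toReal - (Q A.1).toReal|

/-- The moment-constrained uncertainty set around nominal `Qhat` with radius `θ`. -/
def momentSet {d : ℕ} (X : Set (EuclideanSpace ℝ (Fin d))) {K : ℕ}
    (ψ : Fin K → X → ℝ) (Qhat : ProbabilityMeasure X) (θ : ℝ) :
    Set (ProbabilityMeasure X) :=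
  {P | ∀ k, |∫ x, ψ k x ∂(P : Measure X) - ∫ x, ψ k x ∂(Qhat : Measure X)| ≤ θ}

/-- The relaxed discretized uncertainty set: members of the moment-constrained set of
radius `θ` supported on the finite set `{z_1,…,z_N}`. -/
def momentSetDiscrete {d : ℕ} (X : Set (EuclideanSpace ℝ (Fin d))) {K : ℕ}
    (ψ : Fin K → X → ℝ) (Qhat : ProbabilityMeasure X) (θ : ℝ)
    {N : ℕ} (z : Fin N → X) : Set (ProbabilityMeasure X) :=
  {P | (P : Measure X) (Set.range z)ᶜ = 0 ∧ P ∈ momentSet X ψ Qhat θ}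

/-- The worst-case affinity `g(θ) = sup_{P₀ ∈ 𝒫₀^θ, P₁ ∈ 𝒫₁^θ} (1 − TV(P₀, P₁))`. -/
noncomputable def worstAffinity {d : ℕ} (X : Set (EuclideanSpace ℝ (Fin d))) {K : ℕ}
    (ψ : Fin K → X → ℝ) (Q0 Q1 : ProbabilityMeasure X) (θ : ℝ) : ℝ :=
  sSup {r : ℝ | ∃ P0 ∈ momentSet X ψ Q0 θ, ∃ P1 ∈ momentSet X ψ Q1 θ,
    r = 1 - tv (P0 : Measure X) (P1 : Measure X)}

theorem tv_nonneg {Ω : Type*} [MeasurableSpace Ω] (P Q : Measure Ω) : 0 ≤ tv P Q :=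
  Real.iSup_nonneg fun _ => abs_nonneg _

theorem bddAbove_range_abs_measure_sub {Ω : Type*} [MeasurableSpace Ω] (P Q : Measure Ω)
    [IsProbabilityMeasure P] [IsProbabilityMeasure Q] :
    BddAbove (Set.range fun A : {A : Set Ω // MeasurableSet A} =>
      |(P A.1).toReal - (Q A.1).toReal|) := by
  refine ⟨1, ?_⟩
  rintro _ ⟨A, rfl⟩
  exact abs_sub_le_of_nonneg_of_le ENNReal.toReal_nonneg (measureReal_le_one (μ := P))
    ENNReal.toReal_nonneg (measureReal_le_one (μ := Q))

/-- Data processing inequality for the total variation distance. -/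
theorem tv_map_le {Ω Ω' : Type*} [MeasurableSpace Ω] [MeasurableSpace Ω'] (P Q : Measure Ω)
    [IsProbabilityMeasure P] [IsProbabilityMeasure Q] {T : Ω → Ω'} (hT : Measurable T) :
    tv (P.map T) (Q.map T) ≤ tv P Q := by
  have : Nonempty {A : Set Ω' // MeasurableSet A} := ⟨⟨∅, MeasurableSet.empty⟩⟩
  refine ciSup_le fun A => ?_
  rw [Measure.map_apply hT A.2, Measure.map_apply hT A.2]
  exact le_ciSup (bddAbove_range_abs_measure_sub P Q) ⟨T ⁻¹' A.1, hT A.2⟩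

/-- A finite `ε`-net of a metric space admits a measurable projection moving points by at
most `ε`. -/
theorem exists_measurable_projection_of_net {α : Type*} [PseudoMetricSpace α]
    [MeasurableSpace α] [OpensMeasurableSpace α] [Nonempty α] {ε : ℝ} {N : ℕ} (z : Fin N → α)
    (hnet : ∀ x, ∃ j, dist x (z j) ≤ ε) :
    ∃ T : α → α, Measurable T ∧ (∀ x, T x ∈ Set.range z) ∧ ∀ x, dist (T x) x ≤ ε := by
  obtain ⟨j₀, -⟩ := hnet (Classical.arbitrary α)
  let e : ℕ → α := fun n => if h : n < N then z ⟨n, h⟩ else z j₀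
  have he : ∀ n, e n ∈ Set.range z := fun n => by
    by_cases h : n < N <;> simp [e, h]
  refine ⟨SimpleFunc.nearestPt e N, SimpleFunc.measurable _, fun x => he _, fun x => ?_⟩
  obtain ⟨j, hj⟩ := hnet x
  have h := SimpleFunc.edist_nearestPt_le e x j.2.le
  rw [edist_dist, edist_dist, ENNReal.ofReal_le_ofReal_iff dist_nonneg] at h
  refine h.trans ?_
  simpa [e, dist_comm] using hj

section MomentSets

variable {d : ℕ} {X : Set (EuclideanSpace ℝ (Fin d))} {K : ℕ} {ψ : Fin K → X → ℝ}

theorem self_mem_momentSet (Q : ProbabilityMeasure X) {θ : ℝ} (hθ : 0 ≤ θ) :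
    Q ∈ momentSet X ψ Q θ := fun k => by simpa using hθ

/-- Pushing forward along a measurable map that moves points by at most `ε` enlarges the radius
of the moment constraints by at most `ε`. -/
theorem map_mem_momentSet (hX : IsCompact X) (hψ : ∀ k, Continuous (ψ k))
    (hLip : ∀ k, ∀ x y : X, |ψ k x - ψ k y| ≤ dist x y) {Q P : ProbabilityMeasure X}
    {θ ε : ℝ} (hP : P ∈ momentSet X ψ Q θ) {T : X → X} (hT : Measurable T)
    (hTε : ∀ x, dist (T x) x ≤ ε) :
    P.map hT.aemeasurable ∈ momentSet X ψ Q (θ + ε) := by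
  intro k
  have : CompactSpace X := isCompact_iff_compactSpace.mp hX
  obtain ⟨C, hC⟩ := isCompact_univ.exists_bound_of_continuousOn (hψ k).continuousOn
  have hint : Integrable (ψ k) (P : Measure X) :=
    Integrable.of_bound (hψ k).aestronglyMeasurable C (.of_forall fun x => hC x trivial)
  have hintT : Integrable (fun x => ψ k (T x)) (P : Measure X) :=
    Integrable.of_bound ((hψ k).measurable.comp hT).aestronglyMeasurable C
      (.of_forall fun x => hC (T x) trivial)
  have hmap : ∫ x, ψ k x ∂(P.map hT.aemeasurable : Measure X) = ∫ x, ψ k (T x) ∂(P : Measure X) :=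
    integral_map hT.aemeasurable (hψ k).aestronglyMeasurable
  have hdiff : |∫ x, ψ k (T x) ∂(P : Measure X) - ∫ x, ψ k x ∂(P : Measure X)| ≤ ε := by
    rw [← integral_sub hintT hint]
    simpa using norm_integral_le_of_norm_le_const (μ := (P : Measure X))
      (f := fun x => ψ k (T x) - ψ k x) (C := ε)
      (.of_forall fun x => (hLip k (T x) x).trans (hTε x))
  rw [hmap, add_comm θ]
  exact (abs_sub_le _ _ _).trans (add_le_add hdiff (hP k))

theorem bddAbove_one_sub_tv (S S' : Set (ProbabilityMeasure X)) :
    BddAbove {r : ℝ | ∃ P0 ∈ S, ∃ P1 ∈ S', r = 1 - tv (P0 : Measure X) (P1 : Measure X)} := by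
  refine ⟨1, ?_⟩
  rintro _ ⟨P0, -, P1, -, rfl⟩
  exact sub_le_self _ (tv_nonneg _ _)

end MomentSets

/-- **Theorem 3.** Let `γ` be half the worst-case affinity at radius `η`
and `γ_ε` half the worst-case affinity of the discretized relaxation at radius `η + ε`
over an `ε`-net; with `1`-Lipschitz moment functions, `η ∈ [Δ, η₀]`, `η + ε ≤ η₀ < η_max`,
and `L₀` a Lipschitz constant of `g` on `[Δ, η₀]`, one has `|γ_ε − γ| ≤ L₀ ε`. -/
theorem approximation_error_bound
    {d : ℕ} (X : Set (EuclideanSpace ℝ (Fin d))) (hX : IsCompact X)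
    {K : ℕ} (hK : 0 < K) (ψ : Fin K → X → ℝ) (hψ : ∀ k, Continuous (ψ k))
    (hLip : ∀ k, ∀ x y : X, |ψ k x - ψ k y| ≤
      ‖(x : EuclideanSpace ℝ (Fin d)) - (y : EuclideanSpace ℝ (Fin d))‖)
    (Q0 Q1 : ProbabilityMeasure X)
    (Δ η0 η ε : ℝ) (hΔ : 0 < Δ) (hΔη0 : Δ < η0)
    (hη : η ∈ Set.Icc Δ η0) (hε : 0 ≤ ε) (hηε : η + ε ≤ η0)
    (hη0max : η0 < ⨆ k : Fin K,
      |∫ x, ψ k x ∂(Q1 : Measure X) - ∫ x, ψ k x ∂(Q0 : Measure X)| / 2)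
    {N : ℕ} (z : Fin N → X)
    (hnet : ∀ x : X, ∃ j, ‖(x : EuclideanSpace ℝ (Fin d)) - (z j : EuclideanSpace ℝ (Fin d))‖ ≤ ε)
    (L0 : ℝ)
    (hL0 : ∀ a ∈ Set.Icc Δ η0, ∀ b ∈ Set.Icc Δ η0,
      |worstAffinity X ψ Q0 Q1 a - worstAffinity X ψ Q0 Q1 b| ≤ L0 * |a - b|) :
    |(1 / 2) * sSup {r : ℝ | ∃ P0 ∈ momentSetDiscrete X ψ Q0 (η + ε) z,
        ∃ P1 ∈ momentSetDiscrete X ψ Q1 (η + ε) z,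
        r = 1 - tv (P0 : Measure X) (P1 : Measure X)} -
      (1 / 2) * worstAffinity X ψ Q0 Q1 η| ≤ L0 * ε := by
  have : Nonempty X := nonempty_of_isProbabilityMeasure (Q0 : Measure X)
  obtain ⟨T, hT, hTz, hTε⟩ := exists_measurable_projection_of_net z
    (fun x => by simpa [Subtype.dist_eq, dist_eq_norm] using hnet x)
  have hLip' : ∀ k, ∀ x y : X, |ψ k x - ψ k y| ≤ dist x y := fun k x y => by
    simpa [Subtype.dist_eq, dist_eq_norm] using hLip k x y
  have hηpos : 0 ≤ η := hΔ.le.trans hη.1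
  have hmem : ∀ {Q P : ProbabilityMeasure X}, P ∈ momentSet X ψ Q η →
      P.map hT.aemeasurable ∈ momentSetDiscrete X ψ Q (η + ε) z := fun {Q P} hP => by
    refine ⟨?_, map_mem_momentSet hX hψ hLip' hP hT hTε⟩
    have hz : MeasurableSet (Set.range z)ᶜ := (Set.finite_range z).measurableSet.compl
    rw [ProbabilityMeasure.toMeasure_map, Measure.map_apply hT hz]
    have : T ⁻¹' (Set.range z)ᶜ = ∅ := Set.eq_empty_of_forall_notMem fun x hx => hx (hTz x)
    rw [this, measure_empty]
  set γ := sSup {r : ℝ | ∃ P0 ∈ momentSetDiscrete X ψ Q0 (η + ε) z,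
    ∃ P1 ∈ momentSetDiscrete X ψ Q1 (η + ε) z,
    r = 1 - tv (P0 : Measure X) (P1 : Measure X)}
  have hlower : worstAffinity X ψ Q0 Q1 η ≤ γ := by
    refine csSup_le ⟨_, Q0, self_mem_momentSet Q0 hηpos, Q1, self_mem_momentSet Q1 hηpos, rfl⟩ ?_
    rintro _ ⟨P0, hP0, P1, hP1, rfl⟩
    refine le_csSup_of_le (bddAbove_one_sub_tv _ _) ⟨_, hmem hP0, _, hmem hP1, rfl⟩ ?_
    exact sub_le_sub_left (tv_map_le _ _ hT) 1
  have hupper : γ ≤ worstAffinity X ψ Q0 Q1 (η + ε) := by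
    refine csSup_le_csSup (bddAbove_one_sub_tv _ _)
      ⟨_, _, hmem (self_mem_momentSet Q0 hηpos), _, hmem (self_mem_momentSet Q1 hηpos), rfl⟩ ?_
    rintro _ ⟨P0, hP0, P1, hP1, rfl⟩
    exact ⟨P0, hP0.2, P1, hP1.2, rfl⟩
  have hg := hL0 (η + ε) ⟨by linarith [hη.1], hηε⟩ η hη
  rw [add_sub_cancel_left, abs_of_nonneg hε] at hg
  have hle := (le_abs_self _).trans hg
  rw [← mul_sub, abs_of_nonneg (by linarith)]
  linarith
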